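/- Let A be an Abelian group with at least three elements. If G is a finite simple graph in which every non-pendant vertex is a strong support vertex, then G is A-vertex magic. -/

import Mathlib

open scoped Classical

/-- A graph `G` on a finite vertex type is `A`-vertex magic if there is a labeling of the
vertices by nonzero elements of `A` such that the sum of the labels over each open
neighborhood is a constant `μ`. -/
def vertexMagic {V : Type*} [Fintype V] (G : SimpleGraph V) (A : Type*) [AddCommGroup A] :
    Prop :=
  ∃ (l : V → A) (μ : A), (∀ v, l v ≠ 0) ∧
    ∀ v : V, (∑ u : V, if G.Adj v u then l u else 0) = μ

/-!
Fix any `μ ≠ 0`. The sets of pendant neighbors of the various vertices are pairwise disjoint, so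
the labels on the pendant neighbors of each non-pendant vertex `v` can be chosen independently;
as there are at least two of them and `A` has at least three elements, nonzero labels bring the
weight of `v` to `μ`. Every other vertex is labeled `μ`. In particular this is the label of the
unique neighbor of any pendant vertex `v`: it could only be labeled otherwise if it were a pendant
neighbor of a non-pendant vertex, which would have to be `v`.
-/

section Labelings

variable {ι V A : Type*} [AddCommGroup A]

theorem exists_forall_ne_zero_sum_eq (hA : 3 ≤ Cardinal.mk A) {s : Finset V} (hs : s.Nontrivial)
    (a : A) : ∃ f : V → A, (∀ u, f u ≠ 0) ∧ ∑ u ∈ s, f u = a := by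
  obtain ⟨x, hx, y, hy, hxy⟩ := hs
  obtain ⟨g, hg, -⟩ := Cardinal.exists_ne_ne_of_three_le hA 0 0
  let b := ∑ _u ∈ (s \ {x}) \ {y}, g
  obtain ⟨c, hc, hcab⟩ := Cardinal.exists_ne_ne_of_three_le hA 0 (a - b)
  have hy' : y ∈ s \ {x} := by simpa using ⟨hy, hxy.symm⟩
  refine ⟨Function.update (Function.update (fun _ ↦ g) y (a - b - c)) x c, fun u ↦ ?_, ?_⟩
  · simp only [Function.update_apply]
    split_ifs
    exacts [hc, sub_ne_zero.2 hcab.symm, hg]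
  · rw [Finset.sum_update_of_mem hx, Finset.sum_update_of_mem hy']
    abel

theorem exists_forall_ne_zero_sum_eq_of_pairwiseDisjoint (hA : 3 ≤ Cardinal.mk A)
    {I : Set ι} {s : ι → Finset V} (hdisj : I.PairwiseDisjoint s) (hs : ∀ i ∈ I, (s i).Nontrivial)
    (a : ι → A) {μ : A} (hμ : μ ≠ 0) :
    ∃ l : V → A, (∀ u, l u ≠ 0) ∧ (∀ i ∈ I, ∑ u ∈ s i, l u = a i) ∧
      ∀ u, (∀ i ∈ I, u ∉ s i) → l u = μ := by
  choose! f hf hsum using fun i hi ↦ exists_forall_ne_zero_sum_eq hA (hs i hi) (a i)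
  let l u := if h : ∃ i ∈ I, u ∈ s i then f h.choose u else μ
  have l_eq {i u} (hi : i ∈ I) (hu : u ∈ s i) : l u = f i u := by
    have h : ∃ i ∈ I, u ∈ s i := ⟨i, hi, hu⟩
    have hchoose : h.choose = i :=
      hdisj.elim_finset h.choose_spec.1 hi u h.choose_spec.2 hu
    simp only [l, dif_pos h, hchoose]
  refine ⟨l, fun u ↦ ?_, fun i hi ↦ ?_, fun u hu ↦ dif_neg (by simpa using hu)⟩
  · by_cases h : ∃ i ∈ I, u ∈ s i
    · obtain ⟨i, hi, hu⟩ := h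
      exact l_eq hi hu ▸ hf i hi u
    · exact (dif_neg h).trans_ne hμ
  · rw [← hsum i hi]
    exact Finset.sum_congr rfl fun u hu ↦ l_eq hi hu

end Labelings

section PendantNeighbors

variable {V : Type*} (G : SimpleGraph V) [G.LocallyFinite]

/-- The pendant vertices adjacent to `v`; thus `v` is a strong support vertex if and only if this
set is nontrivial. -/
def pendantNeighborFinset (v : V) : Finset V :=
  (G.neighborFinset v).filter fun u ↦ G.degree u = 1

variable {G}

theorem mem_pendantNeighborFinset {u v : V} :
    u ∈ pendantNeighborFinset G v ↔ G.Adj v u ∧ G.degree u = 1 := by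
  simp only [pendantNeighborFinset, Finset.mem_filter, SimpleGraph.mem_neighborFinset]

theorem eq_of_mem_pendantNeighborFinset_of_adj {u v w : V} (hu : u ∈ pendantNeighborFinset G v)
    (huw : G.Adj u w) : v = w := by
  obtain ⟨hvu, hdeg⟩ := mem_pendantNeighborFinset.1 hu
  exact (SimpleGraph.degree_eq_one_iff_existsUnique_adj.1 hdeg).unique hvu.symm huw

theorem pairwiseDisjoint_pendantNeighborFinset (s : Set V) :
    s.PairwiseDisjoint (pendantNeighborFinset G) := fun _ _ _ _ hvw ↦
  Finset.disjoint_left.2 fun _ hv hw ↦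
    hvw (eq_of_mem_pendantNeighborFinset_of_adj hv (mem_pendantNeighborFinset.1 hw).1.symm)

end PendantNeighbors

theorem stmt_11_general {V A : Type*} (G : SimpleGraph V) [G.LocallyFinite] [AddCommGroup A]
    (hA : 3 ≤ Cardinal.mk A)
    (h : ∀ v : V, G.degree v ≠ 1 →
      2 ≤ ((G.neighborFinset v).filter fun u => G.degree u = 1).card)
    {μ : A} (hμ : μ ≠ 0) :
    ∃ l : V → A, (∀ v, l v ≠ 0) ∧ ∀ v, ∑ u ∈ G.neighborFinset v, l u = μ := by
  let rest v := ∑ u ∈ G.neighborFinset v with G.degree u ≠ 1, μ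
  obtain ⟨l, hl, hpendant, hother⟩ :=
    exists_forall_ne_zero_sum_eq_of_pairwiseDisjoint hA
      (pairwiseDisjoint_pendantNeighborFinset {v | G.degree v ≠ 1})
      (fun v hv ↦ Finset.one_lt_card_iff_nontrivial.1 (h v hv)) (fun v ↦ μ - rest v) hμ
  refine ⟨l, hl, fun v ↦ ?_⟩
  by_cases hv : G.degree v = 1
  · obtain ⟨w, hw⟩ := Finset.card_eq_one.1 hv
    have hvw : G.Adj v w := (G.mem_neighborFinset v w).1 (hw ▸ Finset.mem_singleton_self w)
    rw [hw, Finset.sum_singleton]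
    exact hother w fun i hi hwi ↦
      hi (eq_of_mem_pendantNeighborFinset_of_adj hwi hvw.symm ▸ hv)
  · have hrest : ∑ u ∈ G.neighborFinset v with G.degree u ≠ 1, l u = rest v :=
      Finset.sum_congr rfl fun u hu ↦ hother u fun _ _ hui ↦
        (Finset.mem_filter.1 hu).2 (mem_pendantNeighborFinset.1 hui).2
    calc ∑ u ∈ G.neighborFinset v, l u
        = ∑ u ∈ pendantNeighborFinset G v, l u
            + ∑ u ∈ G.neighborFinset v with G.degree u ≠ 1, l u :=
          (Finset.sum_filter_add_sum_filter_not _ _ _).symm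
      _ = μ := by rw [hpendant v hv, hrest, sub_add_cancel]

theorem vertexMagic_iff_sum_neighborFinset {V A : Type*} [Fintype V] [AddCommGroup A]
    {G : SimpleGraph V} : vertexMagic G A ↔
      ∃ (l : V → A) (μ : A), (∀ v, l v ≠ 0) ∧ ∀ v, ∑ u ∈ G.neighborFinset v, l u = μ := by
  simp only [vertexMagic, SimpleGraph.neighborFinset_eq_filter, Finset.sum_filter]

theorem stmt_11 {V : Type*} [Fintype V] (G : SimpleGraph V)
    (A : Type*) [AddCommGroup A] (hA : 3 ≤ Cardinal.mk A)
    (h : ∀ v : V, G.degree v ≠ 1 →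
      2 ≤ ((G.neighborFinset v).filter fun u => G.degree u = 1).card) :
    vertexMagic G A := by
  obtain ⟨μ, hμ, -⟩ := Cardinal.exists_ne_ne_of_three_le hA 0 0
  obtain ⟨l, hl⟩ := stmt_11_general G hA h hμ
  exact vertexMagic_iff_sum_neighborFinset.2 ⟨l, μ, hl⟩
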